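/- Let d ≥ 3, p ∈ (p_c^site(ℤ^d), 1 − p_c^site(ℤ^d)), and q ∈ (0,1). Let μ_q = ((1−q)δ₀ + qδ₁)^{⊗ℕ} be the product measure on Ξ = {0,1}^ℕ. Then ℙ_p-almost surely, μ_q-almost every word ξ ∈ Ξ is seen from some vertex of ℤ^d: ℙ_p(μ_q(S_∞) = 1) = 1. -/

import Mathlib

open MeasureTheory Set

namespace PercWords

/-- Vertices of the hypercubic lattice `ℤ^d`. -/
abbrev Vtx (d : ℕ) := Fin d → ℤ

/-- Site percolation configurations on `ℤ^d` (`true` = state 1, `false` = state 0). -/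
abbrev Config (d : ℕ) := Vtx d → Bool

/-- `u ∼ v` : the Euclidean distance between `u` and `v` is `1`. -/
def adj {d : ℕ} (u v : Vtx d) : Prop := (∑ i, (u i - v i) ^ 2) = 1

/-- `μ` is Bernoulli site percolation with parameter `p` on the index set `ι`:
a probability measure under which, independently, each site has state `true`
with probability `p` and state `false` with probability `1 - p`. -/
def IsBernoulliFam {ι : Type} (p : ℝ) (μ : Measure (ι → Bool)) : Prop :=
  IsProbabilityMeasure μ ∧
    ∀ (s : Finset ι) (f : ι → Bool),
      μ {ω | ∀ v ∈ s, ω v = f v} =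
        ∏ v ∈ s, ENNReal.ofReal (if f v then p else 1 - p)

/-- The word `ξ` is seen from `v` along an infinite self-avoiding path all of whose
vertices lie in `A`. -/
def seesWordIn {d : ℕ} (ω : Config d) (ξ : ℕ → Bool) (A : Set (Vtx d)) (v : Vtx d) : Prop :=
  ∃ γ : ℕ → Vtx d, γ 0 = v ∧ Function.Injective γ ∧
    (∀ i, adj (γ i) (γ (i + 1))) ∧ (∀ i, γ i ∈ A) ∧ (∀ i, ω (γ i) = ξ i)

/-- The word `ξ` is seen from `v` in the configuration `ω`. -/
def seesWord {d : ℕ} (ω : Config d) (ξ : ℕ → Bool) (v : Vtx d) : Prop :=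
  seesWordIn ω ξ Set.univ v

/-- `v` lies in an infinite connected set of `1`-vertices of `ω`. -/
def PercolatesAt {d : ℕ} (ω : Config d) (v : Vtx d) : Prop :=
  ∃ C : Set (Vtx d), v ∈ C ∧ C.Infinite ∧ (∀ u ∈ C, ω u = true) ∧
    ∀ u₁ ∈ C, ∀ u₂ ∈ C, ∃ n : ℕ, ∃ γ : ℕ → Vtx d,
      γ 0 = u₁ ∧ γ n = u₂ ∧ (∀ i < n, adj (γ i) (γ (i + 1))) ∧ (∀ i ≤ n, γ i ∈ C)

/-- The critical point of Bernoulli site percolation on `ℤ^d`, relative to a family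
`ℙ p` of Bernoulli site percolation measures: the infimum of the set of parameters
for which the origin lies in an infinite connected set of `1`-vertices with positive
probability. -/
noncomputable def pcSite (d : ℕ) (ℙ : ℝ → Measure (Config d)) : ℝ :=
  sInf {p : ℝ | p ∈ Set.Icc (0 : ℝ) 1 ∧ 0 < ℙ p {ω | PercolatesAt ω (fun _ => 0)}}

/-!
Fix a word `ξ` and a parameter `p'` at which the origin percolates with positive probability and
which is at most both `p` and `1 - p`. Explore outwards from the origin one vertex at a time,
through the vertices at which a path reading `ξ` may continue. Whatever letter such a vertex has to
show, it shows it with probability at least `p'`, so by induction on the number of unexplored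
vertices a path reading `ξ` gets at least as far as an open path of `p'`-percolation does. Applied
to the complements of larger and larger balls, with compactness to pass to infinite paths, this
bounds the probability that `ξ` is seen from the origin from below by the percolation probability
at `p'`. Being seen from somewhere is translation invariant, so by the zero–one law it has
probability one, and Fubini's theorem exchanges the two almost-sure quantifiers.
-/

section ZeroOne

open scoped symmDiff Pointwise

variable {Ω G X : Type*} [MeasurableSpace Ω] [MeasurableSpace X]

lemma measure_eq_one_of_ae {μ : Measure Ω} [IsProbabilityMeasure μ] {E : Ω → Prop}
    (h : ∀ᵐ ω ∂μ, E ω) : μ {ω | E ω} = 1 :=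
  (measure_congr (Filter.eventuallyEq_univ.2 h)).trans measure_univ

lemma measureReal_le_sq_add_of_symmDiff_le {μ : Measure Ω} [IsProbabilityMeasure μ] {τ : Ω → Ω}
    (hτ : MeasurePreserving τ μ μ) {A C : Set Ω} (hA : MeasurableSet A) (hC : MeasurableSet C)
    (hinv : τ ⁻¹' A = A) (hind : μ.real (C ∩ τ ⁻¹' C) = μ.real C ^ 2) {ε : ℝ}
    (hε : μ.real (C ∆ A) ≤ ε) :
    μ.real A ≤ μ.real A ^ 2 + 4 * ε := by
  have hτε : μ.real ((τ ⁻¹' C) ∆ A) ≤ ε := by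
    have hpre : (τ ⁻¹' C) ∆ A = τ ⁻¹' (C ∆ A) := by
      conv_lhs => rw [← hinv]
      rfl
    rwa [hpre, hτ.measureReal_preimage (hC.symmDiff hA).nullMeasurableSet]
  have hcover : A ⊆ (C ∩ τ ⁻¹' C) ∪ C ∆ A ∪ (τ ⁻¹' C) ∆ A := by
    intro ω hω
    simp only [mem_union, mem_inter_iff, mem_symmDiff]
    tauto
  have hAC : μ.real A ≤ μ.real C ^ 2 + ε + ε :=
    calc μ.real A
      _ ≤ μ.real (C ∩ τ ⁻¹' C) + μ.real (C ∆ A) + μ.real ((τ ⁻¹' C) ∆ A) :=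
          (measureReal_mono hcover).trans <| (measureReal_union_le _ _).trans <| by
            gcongr; exact measureReal_union_le _ _
      _ ≤ μ.real C ^ 2 + ε + ε := by rw [hind]; gcongr
  have hCA : μ.real C - μ.real A ≤ ε :=
    (le_abs_self _).trans <| (abs_measureReal_sub_le_measureReal_symmDiff hC.nullMeasurableSet
      hA.nullMeasurableSet).trans hε
  nlinarith [measureReal_nonneg (μ := μ) (s := C), measureReal_nonneg (μ := μ) (s := A),
    measureReal_le_one (μ := μ) (s := C), measureReal_le_one (μ := μ) (s := A),
    measureReal_nonneg.trans hε]

lemma exists_add_right_notMem [AddGroup G] [Infinite G] (s : Finset G) :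
    ∃ g, ∀ v ∈ s, v + g ∉ s := by
  classical
  obtain ⟨g, hg⟩ := Infinite.exists_notMem_finset (-s + s)
  refine ⟨g, fun v hv hvg => hg ?_⟩
  simpa using Finset.add_mem_add (Finset.neg_mem_neg hv) hvg

variable (P : Measure X) [IsProbabilityMeasure P]

lemma iIndepFun_eval_infinitePi (ι : Type*) :
    ProbabilityTheory.iIndepFun (fun (i : ι) (ω : ι → X) => ω i)
      (Measure.infinitePi fun _ : ι => P) :=
  ProbabilityTheory.iIndepFun_infinitePi (X := fun _ x => x) fun _ => measurable_id

lemma measurePreserving_comp_infinitePi {ι κ : Type*} {f : ι → κ} (hf : Function.Injective f) :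
    MeasurePreserving (fun (ω : κ → X) i => ω (f i)) (Measure.infinitePi fun _ => P)
      (Measure.infinitePi fun _ => P) :=
  ⟨by fun_prop, Measure.map_infinitePi_infinitePi_of_inj hf⟩

lemma measureReal_cylinder_inter_preimage {ι : Type*} {f : ι → ι} (hf : Function.Injective f)
    {s : Finset ι} (hs : ∀ i ∈ s, f i ∉ s) {S : Set (s → X)} (hS : MeasurableSet S) :
    (Measure.infinitePi fun _ => P).real
        (cylinder s S ∩ (fun (ω : ι → X) i => ω (f i)) ⁻¹' cylinder s S) =
      (Measure.infinitePi fun _ => P).real (cylinder s S) ^ 2 := by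
  classical
  have hdisj : Disjoint s (s.image f) := by
    simpa [Finset.disjoint_right] using hs
  have hindep := ((iIndepFun_eval_infinitePi P ι).indepFun_finset s (s.image f) hdisj
    fun i => measurable_pi_apply i).comp measurable_id
    (ψ := fun (η : s.image f → X) (i : s) => η ⟨f i, Finset.mem_image_of_mem f i.2⟩) (by fun_prop)
  have hpre : (Measure.infinitePi fun _ => P).real ((fun (ω : ι → X) i => ω (f i)) ⁻¹' cylinder s S)
      = (Measure.infinitePi fun _ => P).real (cylinder s S) :=
    (measurePreserving_comp_infinitePi P hf).measureReal_preimage hS.cylinder.nullMeasurableSet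
  have hmul := congrArg ENNReal.toReal (hindep.measure_inter_preimage_eq_mul S S hS hS)
  rw [ENNReal.toReal_mul] at hmul
  rw [sq]
  exact hmul.trans (congrArg _ hpre)

lemma exists_cylinder_measureReal_symmDiff_lt {ι : Type*} {A : Set (ι → X)} (hA : MeasurableSet A)
    {μ : Measure (ι → X)} [IsFiniteMeasure μ] {ε : ℝ} (hε : 0 < ε) :
    ∃ (s : Finset ι) (S : Set (s → X)), MeasurableSet S ∧ μ.real (cylinder s S ∆ A) < ε := by
  obtain ⟨C, hC, hCA⟩ := exists_measure_symmDiff_lt_of_generateFrom_isSetRing (μ := μ)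
    isSetRing_measurableCylinders
    ⟨{univ}, by simp, by simpa using univ_mem_measurableCylinders (fun _ : ι => X), by simp⟩
    generateFrom_measurableCylinders.symm hA (ENNReal.ofReal_pos.2 hε)
  obtain ⟨s, S, hS, rfl⟩ := (mem_measurableCylinders _).1 hC
  exact ⟨s, S, hS, ENNReal.toReal_lt_of_lt_ofReal hCA⟩

theorem infinitePi_eq_one_of_translation_invariant [AddGroup G] [Infinite G] {A : Set (G → X)}
    (hA : MeasurableSet A) (hinv : ∀ g, (fun ω h => ω (h + g)) ⁻¹' A = A)
    (hpos : 0 < Measure.infinitePi (fun _ => P) A) :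
    Measure.infinitePi (fun _ => P) A = 1 := by
  set μ := Measure.infinitePi fun _ : G => P
  have hle : μ.real A ≤ μ.real A ^ 2 := by
    refine le_of_forall_pos_le_add fun ε hε => ?_
    obtain ⟨s, S, hS, hsA⟩ := exists_cylinder_measureReal_symmDiff_lt (μ := μ) hA
      (show 0 < ε / 4 by positivity)
    obtain ⟨g, hg⟩ := exists_add_right_notMem s
    have := measureReal_le_sq_add_of_symmDiff_le
      (measurePreserving_comp_infinitePi P (add_left_injective g)) hA hS.cylinder (hinv g)
      (measureReal_cylinder_inter_preimage P (add_left_injective g) hg hS) hsA.le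
    linarith
  have hpos' : 0 < μ.real A := ENNReal.toReal_pos hpos.ne' (measure_ne_top _ _)
  have hone : μ.real A = 1 := by nlinarith [measureReal_le_one (μ := μ) (s := A)]
  rwa [measureReal_def, ENNReal.toReal_eq_one_iff] at hone

end ZeroOne

section FiniteDependence

variable {ι X : Type*} {F G : Finset ι}

lemma exists_eq_cylinder_of_dependsOn {E : Set (ι → X)} (hE : DependsOn (· ∈ E) (F : Set ι)) :
    ∃ S, E = cylinder F S := by
  refine ⟨F.restrict '' E, (subset_preimage_image _ _).antisymm ?_⟩
  rintro ω ⟨ω', hω', h⟩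
  exact (hE fun i hi => congrFun h ⟨i, hi⟩).mp hω'

lemma dependsOn_eval_mem (i : ι) (s : Set X) :
    DependsOn (· ∈ {ω : ι → X | ω i ∈ s}) (({i} : Finset ι) : Set ι) := by
  intro ω ω' h
  simp [h i (by simp)]

variable [Countable X] [MeasurableSpace X] [MeasurableSingletonClass X]

lemma measurableSet_of_dependsOn {E : Set (ι → X)} (hE : DependsOn (· ∈ E) (F : Set ι)) :
    MeasurableSet E := by
  obtain ⟨S, rfl⟩ := exists_eq_cylinder_of_dependsOn hE
  exact S.to_countable.measurableSet.cylinder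

variable (P : Measure X) [IsProbabilityMeasure P]

lemma infinitePi_inter_of_dependsOn (hFG : Disjoint F G) {E H : Set (ι → X)}
    (hE : DependsOn (· ∈ E) (F : Set ι)) (hH : DependsOn (· ∈ H) (G : Set ι)) :
    Measure.infinitePi (fun _ => P) (E ∩ H) =
      Measure.infinitePi (fun _ => P) E * Measure.infinitePi (fun _ => P) H := by
  obtain ⟨S, rfl⟩ := exists_eq_cylinder_of_dependsOn hE
  obtain ⟨T, rfl⟩ := exists_eq_cylinder_of_dependsOn hH
  exact ((iIndepFun_eval_infinitePi P ι).indepFun_finset F G hFG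
    fun i => measurable_pi_apply i).measure_inter_preimage_eq_mul S T
      S.to_countable.measurableSet T.to_countable.measurableSet

lemma infinitePi_eval_mem_inter {u : ι} (hu : u ∉ F) (s : Set X) {E : Set (ι → X)}
    (hE : DependsOn (· ∈ E) (F : Set ι)) :
    Measure.infinitePi (fun _ => P) ({ω | ω u ∈ s} ∩ E) =
      P s * Measure.infinitePi (fun _ => P) E := by
  rw [infinitePi_inter_of_dependsOn P (Finset.disjoint_singleton_left.2 hu)
    (dependsOn_eval_mem u s) hE]
  congr 1
  exact (measurePreserving_eval_infinitePi (fun _ => P) u).measure_preimage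
    s.to_countable.measurableSet.nullMeasurableSet

lemma measureReal_resample {u : ι} (hu : u ∉ F) (s : Set X) {E H : Set (ι → X)}
    (hE : DependsOn (· ∈ E) (F : Set ι)) (hH : DependsOn (· ∈ H) (F : Set ι)) :
    (Measure.infinitePi fun _ => P).real ({ω | ω u ∈ s} ∩ E ∪ {ω | ω u ∈ sᶜ} ∩ H) =
      P.real s * (Measure.infinitePi fun _ => P).real E +
        (1 - P.real s) * (Measure.infinitePi fun _ => P).real H := by
  have hdisj : Disjoint ({ω : ι → X | ω u ∈ s} ∩ E) ({ω | ω u ∈ sᶜ} ∩ H) :=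
    Set.disjoint_left.2 fun ω h h' => h'.1 h.1
  rw [measureReal_union hdisj ((measurableSet_of_dependsOn (dependsOn_eval_mem u sᶜ)).inter
    (measurableSet_of_dependsOn hH)), ← probReal_compl_eq_one_sub s.to_countable.measurableSet]
  simp only [measureReal_def, infinitePi_eval_mem_inter P hu, hE, hH, ENNReal.toReal_mul]

end FiniteDependence

section Reaches

/-- `Reaches r A ω F t ζ`: an `r`-path leads from `t` to `A`, its steps using distinct vertices of
`F` whose states under `ω` spell `ζ 1, ζ 2, …`. The letter `ζ 0` belongs to `t`, whose own state is
not examined. -/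
inductive Reaches {V X : Type*} [DecidableEq V] (r : V → V → Prop) (A : Set V) (ω : V → X) :
    Finset V → V → (ℕ → X) → Prop
  | here {F : Finset V} {t : V} {ζ : ℕ → X} (ht : t ∈ A) : Reaches r A ω F t ζ
  | step {F : Finset V} {t u : V} {ζ : ℕ → X} (hu : u ∈ F) (htu : r t u) (hω : ω u = ζ 1)
      (h : Reaches r A ω (F.erase u) u fun n => ζ (n + 1)) : Reaches r A ω F t ζ

variable {V X : Type*} [DecidableEq V] {r : V → V → Prop} {A : Set V} {ω ω' : V → X}
  {F F' : Finset V} {t : V} {ζ : ℕ → X}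

lemma Reaches.mono (h : Reaches r A ω F t ζ) (hF : F ⊆ F') : Reaches r A ω F' t ζ := by
  induction h generalizing F' with
  | here ht => exact .here ht
  | step hu htu hω _ ih => exact .step (hF hu) htu hω (ih (Finset.erase_subset_erase _ hF))

lemma Reaches.congr (h : Reaches r A ω F t ζ) (hωω' : ∀ v ∈ F, ω v = ω' v) :
    Reaches r A ω' F t ζ := by
  induction h with
  | here ht => exact .here ht
  | step hu htu hω _ ih =>
    exact .step hu htu (hωω' _ hu ▸ hω) (ih fun v hv => hωω' v (Finset.mem_of_mem_erase hv))

lemma Reaches.erase_or {x : X} (h : Reaches r A ω F t fun _ => x) (u : V) :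
    Reaches r A ω (F.erase u) t (fun _ => x) ∨
      ω u = x ∧ Reaches r A ω (F.erase u) u fun _ => x := by
  generalize hζ : (fun _ => x : ℕ → X) = ζ at h
  induction h with
  | here ht => exact .inl (.here ht)
  | @step F t v ζ hv htv hω h ih =>
    subst hζ
    rcases eq_or_ne v u with rfl | hvu
    · exact .inr ⟨hω, h⟩
    rcases ih rfl with ih | ⟨hu, ih⟩
    · rw [Finset.erase_right_comm] at ih
      exact .inl (.step (Finset.mem_erase.2 ⟨hvu, hv⟩) htv hω ih)
    · exact .inr ⟨hu, ih.mono (Finset.erase_subset_erase _ (Finset.erase_subset _ _))⟩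

lemma Reaches.erase_self {x : X} (h : Reaches r A ω F t fun _ => x) :
    Reaches r A ω (F.erase t) t fun _ => x :=
  (h.erase_or t).elim id And.right

/-- The event that `A` is reached through `F` from one of the sources `T`, each source being a
vertex together with the word to be read from there on. -/
def hitEvent (r : V → V → Prop) (A : Set V) (F : Finset V) (T : Set (V × (ℕ → X))) :
    Set (V → X) :=
  {ω | ∃ s ∈ T, Reaches r A ω F s.1 s.2}

/-- The sources `T` with each word replaced by the constant word `1, 1, 1, …`. -/
def openSources (T : Set (V × (ℕ → X))) : Set (V × (ℕ → Bool)) :=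
  (fun s => (s.1, fun _ => true)) '' T

variable {T : Set (V × (ℕ → X))}

lemma dependsOn_hitEvent (r : V → V → Prop) (A : Set V) (F : Finset V) (T : Set (V × (ℕ → X))) :
    DependsOn (· ∈ hitEvent r A F T) (F : Set V) := fun _ _ h => propext
  ⟨fun ⟨s, hs, hr⟩ => ⟨s, hs, hr.congr h⟩,
    fun ⟨s, hs, hr⟩ => ⟨s, hs, hr.congr fun v hv => (h v hv).symm⟩⟩

lemma hitEvent_mono {T' : Set (V × (ℕ → X))} (hF : F ⊆ F') (hT : T ⊆ T') :
    hitEvent r A F T ⊆ hitEvent r A F' T' :=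
  fun _ ⟨s, hs, hr⟩ => ⟨s, hT hs, hr.mono hF⟩

lemma mem_hitEvent_of_forall_not_rel (h : ∀ s ∈ T, ∀ u ∈ F, ¬ r s.1 u) :
    ω ∈ hitEvent r A F T ↔ ∃ s ∈ T, s.1 ∈ A := by
  constructor
  · rintro ⟨s, hs, hr⟩
    cases hr with
    | here ht => exact ⟨s, hs, ht⟩
    | step hu htu => exact (h s hs _ hu htu).elim
  · exact fun ⟨s, hs, hA⟩ => ⟨s, hs, .here hA⟩

lemma hitEvent_openSources_subset_resample (F : Finset V) (u : V) (ζ : ℕ → X) :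
    hitEvent r A F (openSources T) ⊆
      {ω | ω u ∈ ({true} : Set Bool)} ∩ hitEvent r A (F.erase u) (openSources (insert (u, ζ) T)) ∪
        {ω | ω u ∈ ({true} : Set Bool)ᶜ} ∩ hitEvent r A (F.erase u) (openSources T) := by
  rintro ω ⟨_, ⟨s, hs, rfl⟩, hr⟩
  by_cases hω : ω u = true
  · refine .inl ⟨hω, ?_⟩
    rcases hr.erase_or u with h | ⟨-, h⟩
    · exact ⟨_, mem_image_of_mem _ (mem_insert_of_mem _ hs), h⟩
    · exact ⟨_, mem_image_of_mem _ (mem_insert _ _), h⟩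
  · refine .inr ⟨hω, _, mem_image_of_mem _ hs, ?_⟩
    exact (hr.erase_or u).resolve_right fun h => hω h.1

lemma resample_subset_hitEvent {u : V} (ht : (t, ζ) ∈ T) (hu : u ∈ F) (htu : r t u) :
    {ω | ω u ∈ ({ζ 1} : Set X)} ∩
          hitEvent r A (F.erase u) (insert (u, fun n => ζ (n + 1)) T) ∪
        {ω | ω u ∈ ({ζ 1} : Set X)ᶜ} ∩ hitEvent r A (F.erase u) T ⊆
      hitEvent r A F T := by
  rintro ω (⟨hω, s, rfl | hs, hr⟩ | ⟨-, hr⟩)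
  · exact ⟨(t, ζ), ht, .step hu htu hω hr⟩
  · exact ⟨s, hs, hr.mono (Finset.erase_subset _ _)⟩
  · exact hitEvent_mono (Finset.erase_subset _ _) Subset.rfl hr

variable [Countable X] [MeasurableSpace X] [MeasurableSingletonClass X]
  {P : Measure X} [IsProbabilityMeasure P] {P' : Measure Bool} [IsProbabilityMeasure P']

theorem measureReal_hitEvent_openSources_le (hP : ∀ x, P'.real {true} ≤ P.real {x})
    (F : Finset V) (T : Set (V × (ℕ → X))) :
    (Measure.infinitePi fun _ => P').real (hitEvent r A F (openSources T)) ≤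
      (Measure.infinitePi fun _ => P).real (hitEvent r A F T) := by
  set μ := Measure.infinitePi fun _ : V => P
  set μ' := Measure.infinitePi fun _ : V => P'
  induction F using Finset.strongInduction generalizing T with | H F ih
  by_cases hfrontier : ∃ s ∈ T, ∃ u ∈ F, r s.1 u
  · -- Reveal the state of `u`: both sides split into events on one vertex fewer, and the right-hand
    -- one grows with the probability of the letter that `u` has to show.
    obtain ⟨⟨t, ζ⟩, ht, u, hu, htu⟩ := hfrontier
    have hF := Finset.erase_ssubset hu
    have huF := Finset.notMem_erase u F
    set T' := insert (u, fun n => ζ (n + 1)) T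
    have hopen : (0 : ℝ) ≤ 1 - P'.real {true} := sub_nonneg.2 measureReal_le_one
    have hTT' : μ.real (hitEvent r A (F.erase u) T) ≤ μ.real (hitEvent r A (F.erase u) T') :=
      measureReal_mono (hitEvent_mono Subset.rfl (subset_insert _ _))
    calc μ'.real (hitEvent r A F (openSources T))
      _ ≤ P'.real {true} * μ'.real (hitEvent r A (F.erase u) (openSources T')) +
            (1 - P'.real {true}) * μ'.real (hitEvent r A (F.erase u) (openSources T)) := by
          rw [← measureReal_resample P' huF _ (dependsOn_hitEvent ..) (dependsOn_hitEvent ..)]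
          exact measureReal_mono (hitEvent_openSources_subset_resample F u _)
      _ ≤ P'.real {true} * μ.real (hitEvent r A (F.erase u) T') +
            (1 - P'.real {true}) * μ.real (hitEvent r A (F.erase u) T) := by
          gcongr <;> exact ih _ hF _
      _ ≤ P.real {ζ 1} * μ.real (hitEvent r A (F.erase u) T') +
            (1 - P.real {ζ 1}) * μ.real (hitEvent r A (F.erase u) T) := by
          nlinarith [hP (ζ 1)]
      _ ≤ μ.real (hitEvent r A F T) := by
          rw [← measureReal_resample P huF _ (dependsOn_hitEvent ..) (dependsOn_hitEvent ..)]
          exact measureReal_mono (resample_subset_hitEvent ht hu htu)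
  · push Not at hfrontier
    have hmem (ω : V → X) := mem_hitEvent_of_forall_not_rel (A := A) (ω := ω) hfrontier
    have hmem' (ω : V → Bool) := mem_hitEvent_of_forall_not_rel (A := A) (ω := ω)
      (forall_mem_image.2 hfrontier : ∀ s ∈ openSources T, ∀ u ∈ F, ¬ r s.1 u)
    by_cases hA : ∃ s ∈ T, s.1 ∈ A
    · rw [eq_univ_of_forall fun ω => (hmem ω).2 hA]
      simp [measureReal_le_one]
    · have hempty : hitEvent r A F (openSources T) = ∅ :=
        eq_empty_of_forall_notMem fun ω hω => hA <| by simpa [openSources] using (hmem' ω).1 hω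
      simp [hempty]

end Reaches

section Paths

variable {V X : Type*} {r : V → V → Prop} {A : Set V} {ω : V → X} {ξ : ℕ → X} {v o : V} {n m : ℕ}

/-- `γ` is a self-avoiding `r`-path with `n` steps starting at `v`. -/
structure IsSelfAvoidingPath (r : V → V → Prop) (v : V) (γ : Fin (n + 1) → V) : Prop where
  start : γ 0 = v
  injective : Function.Injective γ
  rel (i : Fin n) : r (γ i.castSucc) (γ i.succ)

/-- The letters `ξ 0, …, ξ n` are read by `ω` along a self-avoiding `r`-path from `v`. -/
def SeesPrefix (r : V → V → Prop) (ω : V → X) (ξ : ℕ → X) (v : V) (n : ℕ) : Prop :=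
  ∃ γ : Fin (n + 1) → V, IsSelfAvoidingPath r v γ ∧ ∀ i, ω (γ i) = ξ i

/-- The word `ξ` is seen from `v` in `ω`, for a general relation `r` in place of adjacency in `ℤ^d`
and a general alphabet `X`. -/
def Sees (r : V → V → Prop) (ω : V → X) (ξ : ℕ → X) (v : V) : Prop :=
  ∃ γ : ℕ → V, γ 0 = v ∧ Function.Injective γ ∧ (∀ i, r (γ i) (γ (i + 1))) ∧ ∀ i, ω (γ i) = ξ i

/-- The vertices at which some `r`-path from `o` with `n` steps ends. -/
def stepsFrom (r : V → V → Prop) (o : V) : ℕ → Set V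
  | 0 => {o}
  | n + 1 => {w | ∃ u ∈ stepsFrom r o n, r u w}

lemma finite_stepsFrom (hr : ∀ v, {u | r v u}.Finite) (o : V) (n : ℕ) :
    (stepsFrom r o n).Finite := by
  induction n with
  | zero => exact finite_singleton o
  | succ n ih =>
    refine (ih.biUnion fun u _ => hr u).subset ?_
    rintro w ⟨u, hu, huw⟩
    exact mem_biUnion hu huw

namespace IsSelfAvoidingPath

variable {γ : Fin (n + 1) → V}

lemma mem_stepsFrom (hγ : IsSelfAvoidingPath r o γ) (i : Fin (n + 1)) :
    γ i ∈ stepsFrom r o i := by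
  induction i using Fin.induction with
  | zero => exact hγ.start
  | succ i ih => exact ⟨_, ih, hγ.rel i⟩

lemma castLE (hγ : IsSelfAvoidingPath r v γ) (h : m + 1 ≤ n + 1) :
    IsSelfAvoidingPath r v (γ ∘ Fin.castLE h) where
  start := hγ.start
  injective := hγ.injective.comp (Fin.castLE_injective h)
  rel i := hγ.rel (i.castLE (Nat.le_of_succ_le_succ h))

lemma cons (hγ : IsSelfAvoidingPath r v γ) (hov : r o v) (ho : o ∉ range γ) :
    IsSelfAvoidingPath r o (Fin.cons o γ : Fin (n + 2) → V) where
  start := rfl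
  injective := Fin.cons_injective_iff.2 ⟨ho, hγ.injective⟩
  rel i := by
    refine Fin.cases ?_ (fun i => ?_) i
    · simpa [hγ.start] using hov
    · simpa [← Fin.succ_castSucc] using hγ.rel i

end IsSelfAvoidingPath

lemma finite_setOf_isSelfAvoidingPath (hr : ∀ v, {u | r v u}.Finite) (v : V) (n : ℕ) :
    {γ : Fin (n + 1) → V | IsSelfAvoidingPath r v γ}.Finite :=
  (Finite.pi fun i : Fin (n + 1) => finite_stepsFrom hr v i).subset
    fun _ hγ i _ => hγ.mem_stepsFrom i

lemma antitone_seesPrefix (r : V → V → Prop) (ω : V → X) (ξ : ℕ → X) (v : V) :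
    Antitone (SeesPrefix r ω ξ v) := by
  rintro m n hmn ⟨γ, hγ, hξ⟩
  exact ⟨_, hγ.castLE (Nat.succ_le_succ hmn), fun i => hξ _⟩

lemma Sees.seesPrefix (h : Sees r ω ξ v) (n : ℕ) : SeesPrefix r ω ξ v n := by
  obtain ⟨γ, hstart, hinj, hrel, hξ⟩ := h
  exact ⟨fun i => γ i, ⟨hstart, hinj.comp Fin.val_injective, fun i => hrel i⟩, fun i => hξ i⟩

lemma sees_of_forall_seesPrefix (hr : ∀ v, {u | r v u}.Finite)
    (h : ∀ n, SeesPrefix r ω ξ v n) : Sees r ω ξ v := by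
  let paths (n : ℕ) : Set (Fin (n + 1) → V) :=
    {γ | IsSelfAvoidingPath r v γ ∧ ∀ i, ω (γ i) = ξ i}
  have hfin (n : ℕ) : (paths n).Finite :=
    (finite_setOf_isSelfAvoidingPath hr v n).subset fun _ hγ => hγ.1
  have (n : ℕ) : Finite (paths n) := hfin n
  have (n : ℕ) : Nonempty (paths n) := nonempty_subtype.2 (h n)
  obtain ⟨Γ, hΓ⟩ := exists_seq_forall_proj_of_forall_finite (α := fun n => paths n)
    (fun hij γ => ⟨γ.1 ∘ Fin.castLE (Nat.succ_le_succ hij), γ.2.1.castLE _, fun i => γ.2.2 _⟩)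
    (fun _ _ => rfl) (fun _ _ _ _ _ _ => rfl) (fun _ _ => toFinite _)
  have hval {i n : ℕ} (hin : i ≤ n) : (Γ i).1 (Fin.last i) = (Γ n).1 ⟨i, by omega⟩ :=
    (congrFun (congrArg Subtype.val (hΓ hin)) (Fin.last i)).symm
  refine ⟨fun i => (Γ i).1 (Fin.last i), (Γ 0).2.1.start, fun i j hij => ?_, fun i => ?_,
    fun i => (Γ i).2.2 _⟩
  · dsimp only at hij
    rw [hval (le_max_left i j), hval (le_max_right i j)] at hij
    simpa using (Γ _).2.1.injective hij
  · dsimp only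
    rw [hval i.le_succ]
    exact (Γ (i + 1)).2.1.rel (Fin.last i)

lemma sees_iff_forall_seesPrefix (hr : ∀ v, {u | r v u}.Finite) :
    Sees r ω ξ v ↔ ∀ n, SeesPrefix r ω ξ v n :=
  ⟨Sees.seesPrefix, sees_of_forall_seesPrefix hr⟩

lemma Reaches.exists_path [DecidableEq V] {F : Finset V} (h : Reaches r A ω F v ξ) (hv : v ∉ F)
    (hω : ω v = ξ 0) :
    ∃ (n : ℕ) (γ : Fin (n + 1) → V), IsSelfAvoidingPath r v γ ∧ (∀ i, ω (γ i) = ξ i) ∧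
      (∀ i, γ i ∈ insert v F) ∧ γ (Fin.last n) ∈ A := by
  induction h with
  | @here F t ζ ht =>
    exact ⟨0, fun _ => t,
      ⟨rfl, Function.injective_of_subsingleton (α := Fin 1) _, fun i => i.elim0⟩,
      fun i => by simpa [Fin.fin_one_eq_zero i] using hω, by simp, ht⟩
  | @step F t u ζ hu htu hωu _ ih =>
    obtain ⟨n, γ, hγ, hζ, hF, hA⟩ := ih (Finset.notMem_erase _ _) hωu
    rw [Finset.insert_erase hu] at hF
    refine ⟨n + 1, Fin.cons t γ, hγ.cons htu ?_, ?_, ?_, hA⟩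
    · rintro ⟨i, rfl⟩
      exact hv (hF i)
    · exact fun i => Fin.cases hω hζ i
    · exact fun i => Fin.cases (Finset.mem_insert_self _ _)
        (fun i => Finset.mem_insert_of_mem (hF i)) i

lemma Reaches.seesPrefix [DecidableEq V] {F : Finset V}
    (h : Reaches r (⋃ i < n, stepsFrom r v i)ᶜ ω F v ξ) (hv : v ∉ F) (hω : ω v = ξ 0) :
    SeesPrefix r ω ξ v n := by
  obtain ⟨m, γ, hγ, hξ, -, hlast⟩ := h.exists_path hv hω
  have hnm : n ≤ m := by
    by_contra! hmn
    exact hlast (mem_biUnion hmn (hγ.mem_stepsFrom (Fin.last m)))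
  exact antitone_seesPrefix r ω ξ v hnm ⟨γ, hγ, hξ⟩

variable [Countable V] [Countable X] [MeasurableSpace X] [MeasurableSingletonClass X]

lemma measurableSet_seesPrefix (r : V → V → Prop) (v : V) (n : ℕ) :
    MeasurableSet {q : (V → X) × (ℕ → X) | SeesPrefix r q.1 q.2 v n} := by
  simp only [SeesPrefix, ofPred_exists, ofPred_and, ofPred_forall]
  exact .iUnion fun γ => .inter (.const _) <| .iInter fun i =>
    measurableSet_eq_fun (by fun_prop) (by fun_prop)

lemma measurableSet_exists_sees (hr : ∀ v, {u | r v u}.Finite) :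
    MeasurableSet {q : (V → X) × (ℕ → X) | ∃ v, Sees r q.1 q.2 v} := by
  simp only [sees_iff_forall_seesPrefix hr, ofPred_exists, ofPred_forall]
  exact .iUnion fun v => .iInter fun n => measurableSet_seesPrefix r v n

end Paths

section Domination

variable {V : Type*} {r : V → V → Prop} {A : Set V} {ω : V → Bool} {o : V}

/-- The vertex `o` is open and its open cluster, with respect to the relation `r`, is infinite. -/
def Percolates (r : V → V → Prop) (ω : V → Bool) (o : V) : Prop :=
  ω o = true ∧ {v | Relation.ReflTransGen (fun a b => r a b ∧ ω b = true) o v}.Infinite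

lemma exists_reaches_of_reflTransGen [DecidableEq V] {a : V}
    (h : Relation.ReflTransGen (fun a b => r a b ∧ ω b = true) o a) (ha : a ∈ A) :
    ∃ F : Finset V, Reaches r A ω F o fun _ => true := by
  induction h using Relation.ReflTransGen.head_induction_on with
  | refl => exact ⟨∅, .here ha⟩
  | @head u v huv _ ih =>
    obtain ⟨F, hF⟩ := ih
    refine ⟨insert v F, .step (Finset.mem_insert_self v F) huv.1 huv.2 ?_⟩
    exact hF.erase_self.mono (Finset.erase_subset_erase v (Finset.subset_insert v F))

lemma Percolates.exists_reaches [DecidableEq V] (h : Percolates r ω o) (hA : Aᶜ.Finite) :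
    ∃ F : Finset V, Reaches r A ω (F.erase o) o fun _ => true := by
  obtain ⟨a, ha, haA⟩ := h.2.exists_notMem_finite hA
  obtain ⟨F, hF⟩ := exists_reaches_of_reflTransGen ha (notMem_compl_iff.1 haA)
  exact ⟨F, hF.erase_self⟩

variable {X : Type*} [Countable X] [MeasurableSpace X] [MeasurableSingletonClass X]
  {P : Measure X} [IsProbabilityMeasure P] {P' : Measure Bool} [IsProbabilityMeasure P']

lemma measure_mem_inter_hitEvent_le [DecidableEq V] (hP : ∀ x, P'.real {true} ≤ P.real {x})
    (A : Set V) (F : Finset V) (o : V) (ξ : ℕ → X) :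
    Measure.infinitePi (fun _ => P')
        ({ω | ω o ∈ ({true} : Set Bool)} ∩ hitEvent r A (F.erase o) {(o, fun _ => true)}) ≤
      Measure.infinitePi (fun _ => P)
        ({ω | ω o ∈ ({ξ 0} : Set X)} ∩ hitEvent r A (F.erase o) {(o, ξ)}) := by
  have hF := Finset.notMem_erase o F
  have hhit := measureReal_hitEvent_openSources_le (r := r) (A := A) hP (F.erase o) {(o, ξ)}
  rw [openSources, image_singleton] at hhit
  rw [infinitePi_eval_mem_inter P' hF _ (dependsOn_hitEvent ..),
    infinitePi_eval_mem_inter P hF _ (dependsOn_hitEvent ..)]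
  exact mul_le_mul' ((ENNReal.toReal_le_toReal (measure_ne_top _ _) (measure_ne_top _ _)).1 (hP _))
    ((ENNReal.toReal_le_toReal (measure_ne_top _ _) (measure_ne_top _ _)).1 hhit)

variable [Countable V]

lemma measure_percolates_le_seesPrefix (hr : ∀ v, {u | r v u}.Finite)
    (hP : ∀ x, P'.real {true} ≤ P.real {x}) (ξ : ℕ → X) (o : V) (n : ℕ) :
    Measure.infinitePi (fun _ => P') {ω | Percolates r ω o} ≤
      Measure.infinitePi (fun _ => P) {ω | SeesPrefix r ω ξ o n} := by
  classical
  set A : Set V := (⋃ i < n, stepsFrom r o i)ᶜ with hA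
  have hAfin : Aᶜ.Finite := by
    rw [hA, compl_compl]
    exact (finite_lt_nat n).biUnion fun i _ => finite_stepsFrom hr o i
  let E (F : Finset V) : Set (V → Bool) :=
    {ω | ω o ∈ ({true} : Set Bool)} ∩ hitEvent r A (F.erase o) {(o, fun _ => true)}
  have hE : Monotone E := fun F F' hF => inter_subset_inter_right _ <|
    hitEvent_mono (Finset.erase_subset_erase o hF) Subset.rfl
  calc Measure.infinitePi (fun _ => P') {ω | Percolates r ω o}
    _ ≤ Measure.infinitePi (fun _ => P') (⋃ F, E F) := by
        refine measure_mono fun ω hω => mem_iUnion.2 ?_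
        obtain ⟨F, hF⟩ := hω.exists_reaches hAfin
        exact ⟨F, hω.1, _, rfl, hF⟩
    _ = ⨆ F, Measure.infinitePi (fun _ => P') (E F) := hE.directed_le.measure_iUnion
    _ ≤ Measure.infinitePi (fun _ => P) {ω | SeesPrefix r ω ξ o n} := by
        refine iSup_le fun F => (measure_mem_inter_hitEvent_le hP A F o ξ).trans ?_
        refine measure_mono ?_
        rintro ω ⟨hω, _, rfl, hreach⟩
        exact hreach.seesPrefix (Finset.notMem_erase o F) hω

theorem measure_percolates_le_sees (hr : ∀ v, {u | r v u}.Finite)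
    (hP : ∀ x, P'.real {true} ≤ P.real {x}) (ξ : ℕ → X) (o : V) :
    Measure.infinitePi (fun _ => P') {ω | Percolates r ω o} ≤
      Measure.infinitePi (fun _ => P) {ω | Sees r ω ξ o} := by
  have hmeas (n : ℕ) : MeasurableSet {ω : V → X | SeesPrefix r ω ξ o n} :=
    (measurableSet_seesPrefix r o n).preimage measurable_prodMk_right
  have hanti : Antitone fun n => {ω : V → X | SeesPrefix r ω ξ o n} :=
    fun _ _ hmn ω hω => antitone_seesPrefix r ω ξ o hmn hω
  simp only [sees_iff_forall_seesPrefix hr, ofPred_forall]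
  rw [hanti.measure_iInter (fun n => (hmeas n).nullMeasurableSet) ⟨0, measure_ne_top _ _⟩]
  exact le_iInf fun n => measure_percolates_le_seesPrefix hr hP ξ o n

end Domination

section AlmostAllWords

variable {V X : Type*} [AddGroup V] {r : V → V → Prop}

lemma Sees.of_translate (hr : ∀ g u v, r u v → r (u + g) (v + g)) {ω : V → X} {ξ : ℕ → X} {g v : V}
    (h : Sees r (fun u => ω (u + g)) ξ v) : Sees r ω ξ (v + g) := by
  obtain ⟨γ, rfl, hinj, hrel, hξ⟩ := h
  exact ⟨fun i => γ i + g, rfl, (add_left_injective g).comp hinj, fun i => hr g _ _ (hrel i), hξ⟩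

lemma preimage_translate_exists_sees (hr : ∀ g u v, r u v → r (u + g) (v + g)) (ξ : ℕ → X) (g : V) :
    (fun ω u => ω (u + g)) ⁻¹' {ω : V → X | ∃ v, Sees r ω ξ v} = {ω | ∃ v, Sees r ω ξ v} := by
  ext ω
  constructor
  · rintro ⟨v, h⟩
    exact ⟨v + g, h.of_translate hr⟩
  · rintro ⟨v, h⟩
    refine ⟨v + -g, Sees.of_translate hr ?_⟩
    simpa using h

variable [Infinite V] [Countable V] [Countable X] [MeasurableSpace X] [MeasurableSingletonClass X]
  {P : Measure X} [IsProbabilityMeasure P] {P' : Measure Bool} [IsProbabilityMeasure P']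

theorem ae_exists_sees (hfin : ∀ v, {u | r v u}.Finite) (hr : ∀ g u v, r u v → r (u + g) (v + g))
    (hP : ∀ x, P'.real {true} ≤ P.real {x}) {o : V}
    (hperc : 0 < Measure.infinitePi (fun _ => P') {ω | Percolates r ω o}) (ξ : ℕ → X) :
    ∀ᵐ ω ∂Measure.infinitePi fun _ => P, ∃ v, Sees r ω ξ v := by
  have hmeas : MeasurableSet {ω : V → X | ∃ v, Sees r ω ξ v} :=
    (measurableSet_exists_sees hfin).preimage measurable_prodMk_right
  refine (mem_ae_iff_prob_eq_one hmeas).2 <| infinitePi_eq_one_of_translation_invariant P hmeas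
    (preimage_translate_exists_sees hr ξ) ?_
  calc 0
    _ < Measure.infinitePi (fun _ => P') {ω | Percolates r ω o} := hperc
    _ ≤ Measure.infinitePi (fun _ => P) {ω | Sees r ω ξ o} := measure_percolates_le_sees hfin hP ξ o
    _ ≤ Measure.infinitePi (fun _ => P) {ω | ∃ v, Sees r ω ξ v} := measure_mono fun _ h => ⟨o, h⟩

theorem ae_ae_exists_sees (hfin : ∀ v, {u | r v u}.Finite)
    (hr : ∀ g u v, r u v → r (u + g) (v + g)) (hP : ∀ x, P'.real {true} ≤ P.real {x}) {o : V}
    (hperc : 0 < Measure.infinitePi (fun _ => P') {ω | Percolates r ω o})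
    (ν : Measure (ℕ → X)) [SFinite ν] :
    ∀ᵐ ω ∂Measure.infinitePi fun _ => P, ∀ᵐ ξ ∂ν, ∃ v, Sees r ω ξ v :=
  (Measure.ae_ae_comm (measurableSet_exists_sees hfin)).2 <|
    .of_forall (ae_exists_sees hfin hr hP hperc)

end AlmostAllWords

section Bernoulli

open ProbabilityTheory (bernoulliMeasure)

lemma bernoulliMeasure_real_singleton (p : unitInterval) (b : Bool) :
    (bernoulliMeasure true false p).real {b} = if b then (p : ℝ) else 1 - p := by
  cases b <;> simp

lemma bernoulliMeasure_real_true_le_singleton {p p' : unitInterval}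
    (h : (p' : ℝ) ≤ min (p : ℝ) (1 - p)) (b : Bool) :
    (bernoulliMeasure true false p').real {true} ≤ (bernoulliMeasure true false p).real {b} := by
  obtain ⟨hp, hq⟩ := le_min_iff.1 h
  cases b
  · simpa [bernoulliMeasure_real_singleton] using hq
  · simpa [bernoulliMeasure_real_singleton] using hp

lemma IsBernoulliFam.eq_infinitePi {ι : Type} {p : unitInterval} {μ : Measure (ι → Bool)}
    (h : IsBernoulliFam p μ) : μ = Measure.infinitePi fun _ => bernoulliMeasure true false p := by
  classical
  have := h.1
  refine IsProjectiveLimit.unique (fun s => Measure.ext_of_singleton fun f => ?_)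
    (Measure.isProjectiveLimit_infinitePi _)
  let g (i : ι) : Bool := if hi : i ∈ s then f ⟨i, hi⟩ else true
  have hfg (i : s) : g i = f i := dif_pos i.2
  have hpre : (s.restrict (π := fun _ => Bool)) ⁻¹' {f} = {ω | ∀ i ∈ s, ω i = g i} := by
    ext ω
    simp only [mem_preimage, mem_singleton_iff, funext_iff, Subtype.forall, mem_ofPred_eq]
    exact forall₂_congr fun i hi => by rw [← hfg ⟨i, hi⟩]; rfl
  rw [Measure.map_apply (Finset.measurable_restrict s) (measurableSet_singleton f), hpre, h.2,
    Measure.pi_singleton, ← Finset.prod_coe_sort]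
  exact Finset.prod_congr rfl fun i _ => by
    rw [hfg, ← bernoulliMeasure_real_singleton, ofReal_measureReal]

end Bernoulli

section Lattice

variable {d : ℕ}

lemma finite_setOf_adj (v : Vtx d) : {u | adj v u}.Finite := by
  refine (finite_Icc (v - 1) (v + 1)).subset fun u huv => ?_
  have hcoord (i : Fin d) : |v i - u i| ≤ 1 := by
    rw [← sq_le_one_iff_abs_le_one, ← show ∑ j, (v j - u j) ^ 2 = 1 from huv]
    exact Finset.single_le_sum (f := fun j => (v j - u j) ^ 2) (fun _ _ => sq_nonneg _)
      (Finset.mem_univ i)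
  exact ⟨fun i => sub_le_of_abs_sub_le_right (hcoord i),
    fun i => sub_le_iff_le_add'.1 (abs_sub_le_iff.1 (hcoord i)).2⟩

lemma adj_add_right (g u v : Vtx d) (h : adj u v) : adj (u + g) (v + g) := by
  simpa [adj] using h

lemma adj_single_iff (i : Fin d) {a b : ℤ} :
    adj (Pi.single i a : Vtx d) (Pi.single i b) ↔ (a - b) ^ 2 = 1 := by
  rw [adj, Finset.sum_eq_single_of_mem i (Finset.mem_univ i) fun j _ hj => by simp [hj]]
  simp

lemma seesWord_iff_sees {ω : Config d} {ξ : ℕ → Bool} {v : Vtx d} :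
    seesWord ω ξ v ↔ Sees adj ω ξ v := by
  simp [seesWord, seesWordIn, Sees]

lemma PercolatesAt.percolates {ω : Config d} {v : Vtx d} (h : PercolatesAt ω v) :
    Percolates adj ω v := by
  obtain ⟨C, hv, hinf, hopen, hconn⟩ := h
  refine ⟨hopen v hv, hinf.mono fun u hu => ?_⟩
  obtain ⟨n, γ, rfl, rfl, hadj, hC⟩ := hconn v hv u hu
  have hpath : Relation.ReflTransGen (fun i j => adj (γ i) (γ j) ∧ ω (γ j) = true) 0 n :=
    reflTransGen_of_succ_of_le _
      (fun i hi => ⟨hadj i hi.2, hopen _ (hC _ (Nat.succ_le_of_lt hi.2))⟩) n.zero_le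
  exact hpath.lift γ fun _ _ => id

lemma percolatesAt_of_forall_eq_true [NeZero d] {ω : Config d} (hω : ∀ v, ω v = true) :
    PercolatesAt ω fun _ => 0 := by
  refine ⟨range (Pi.single 0), ⟨0, Pi.single_zero 0⟩,
    infinite_range_of_injective (Pi.single_injective 0), fun u _ => hω u, ?_⟩
  rintro _ ⟨a, rfl⟩ _ ⟨b, rfl⟩
  refine ⟨(b - a).natAbs, fun i => Pi.single 0 (a + (b - a).sign * i), by simp, ?_,
    fun i hi => ?_, fun i _ => ⟨_, rfl⟩⟩
  · simp [Int.sign_mul_abs]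
  · have hab : b - a ≠ 0 := by omega
    rw [adj_single_iff]
    push_cast
    rcases hab.lt_or_gt with h | h
    · rw [Int.sign_eq_neg_one_of_neg h]; ring
    · rw [Int.sign_eq_one_of_pos h]; ring

lemma measure_percolatesAt_pos_of_one [NeZero d] {μ : Measure (Config d)}
    (hμ : IsBernoulliFam 1 μ) : 0 < μ {ω | PercolatesAt ω fun _ => 0} := by
  have := hμ.1
  have hopen : ∀ᵐ ω ∂μ, ∀ v, ω v = true :=
    ae_all_iff.2 fun v => ae_iff.2 <| by simpa using hμ.2 {v} fun _ => false
  have hone : μ {ω | PercolatesAt ω fun _ => 0} = 1 :=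
    measure_eq_one_of_ae (hopen.mono fun ω hω => percolatesAt_of_forall_eq_true hω)
  simp [hone]

lemma pcSite_nonneg (ℙ : ℝ → Measure (Config d)) : 0 ≤ pcSite d ℙ :=
  Real.sInf_nonneg fun _ hx => hx.1.1

lemma exists_lt_percolatesAt_pos_of_pcSite_lt [NeZero d] {ℙ : ℝ → Measure (Config d)}
    (hP : ∀ q : ℝ, 0 ≤ q → q ≤ 1 → IsBernoulliFam q (ℙ q)) {p : ℝ} (hp : pcSite d ℙ < p) :
    ∃ p' : unitInterval, p' < p ∧ 0 < ℙ p' {ω | PercolatesAt ω fun _ => 0} := by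
  have hne : {q : ℝ | q ∈ Icc (0 : ℝ) 1 ∧ 0 < ℙ q {ω | PercolatesAt ω fun _ => 0}}.Nonempty :=
    ⟨1, ⟨zero_le_one, le_rfl⟩, measure_percolatesAt_pos_of_one (hP 1 zero_le_one le_rfl)⟩
  obtain ⟨p', ⟨hp'I, hpos⟩, hlt⟩ := exists_lt_of_csInf_lt hne hp
  exact ⟨⟨p', hp'I⟩, hlt, hpos⟩

end Lattice

theorem almost_all_words_seen_general
    (d : ℕ) (hd : 0 < d)
    (ℙ : ℝ → Measure (Config d))
    (hP : ∀ q : ℝ, 0 ≤ q → q ≤ 1 → IsBernoulliFam q (ℙ q))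
    (p : ℝ) (hp : pcSite d ℙ < p) (hp' : p < 1 - pcSite d ℙ)
    (ν : Measure (ℕ → Bool)) [IsProbabilityMeasure ν] :
    ℙ p {ω | ν {ξ | ∃ v : Vtx d, seesWord ω ξ v} = 1} = 1 := by
  have : NeZero d := ⟨hd.ne'⟩
  obtain ⟨p', hp'lt, hperc⟩ := exists_lt_percolatesAt_pos_of_pcSite_lt hP
    (lt_min hp (lt_sub_comm.1 hp'))
  have hpI : p ∈ unitInterval := by constructor <;> linarith [pcSite_nonneg ℙ]
  have hμ := hP p hpI.1 hpI.2
  have := hμ.1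
  rw [(hP p' p'.2.1 p'.2.2).eq_infinitePi] at hperc
  have hseen := ae_ae_exists_sees finite_setOf_adj adj_add_right
    (bernoulliMeasure_real_true_le_singleton (p := ⟨p, hpI⟩) hp'lt.le)
    (hperc.trans_le (measure_mono fun _ h => h.percolates)) ν
  rw [← IsBernoulliFam.eq_infinitePi (p := ⟨p, hpI⟩) hμ] at hseen
  refine measure_eq_one_of_ae ?_
  filter_upwards [hseen] with ω hω
  simp only [seesWord_iff_sees]
  exact measure_eq_one_of_ae hω

/-- **Almost all words are seen** : for `d ≥ 3`,
`p ∈ (p_c^site(ℤ^d), 1 − p_c^site(ℤ^d))` and `q ∈ (0,1)`, `ℙ_p`-almost surely,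
`μ_q`-almost every word is seen from some vertex of `ℤ^d` :
`ℙ_p(μ_q(S_∞) = 1) = 1`, where `μ_q` is the Bernoulli-`q` product measure on words. -/
theorem almost_all_words_seen
    (d : ℕ) (hd : 3 ≤ d)
    (ℙ : ℝ → Measure (Config d))
    (hP : ∀ q : ℝ, 0 ≤ q → q ≤ 1 → IsBernoulliFam q (ℙ q))
    (p : ℝ) (hp : pcSite d ℙ < p) (hp' : p < 1 - pcSite d ℙ)
    (q : ℝ) (hq0 : 0 < q) (hq1 : q < 1)
    (ν : Measure (ℕ → Bool)) (hν : IsBernoulliFam q ν) :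
    ℙ p {ω | ν {ξ | ∃ v : Vtx d, seesWord ω ξ v} = 1} = 1 := by
  have := hν.1
  exact almost_all_words_seen_general d (by omega) ℙ hP p hp hp' ν

end PercWords
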